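/- Form core approximation: for every smooth function u on the closed unit ball B̄ ⊂ ℝ^d, there exist u_n ∈ C_0^∞(B) with u_n → u in L²(B) such that the quadratic forms q(u_n,u_n) = ∫_B (1-|x|²)|∇u_n|² dx remain bounded in n. In particular, taking u = 1 and u_n(x) = h_n(|x|) with h_n ∈ C_0^∞(-1,1), h_n = 1 on [0, 1-1/n], |h_n'| ≤ 2n, one has ∫_B (1-|x|²)|∇u_n|² dx ≤ C for a constant C independent of n. -/

import Mathlib

open MeasureTheory Filter Topology
noncomputable section

/-- Euclidean space ℝ^d. -/
abbrev Ed (d : ℕ) := EuclideanSpace ℝ (Fin d)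

/-- Partial derivative ∂ᵢ of a complex-valued function. -/
def pd {d : ℕ} (i : Fin d) (f : Ed d → ℂ) (x : Ed d) : ℂ :=
  fderiv ℝ f x (EuclideanSpace.single i 1)

/-- Laplacian Δ = ∑ᵢ ∂ᵢ². -/
def lap {d : ℕ} (f : Ed d → ℂ) (x : Ed d) : ℂ := ∑ i, pd i (pd i f) x

/-- Radial derivative r∂ᵣ = ∑ᵢ xᵢ ∂ᵢ. -/
def rdr {d : ℕ} (f : Ed d → ℂ) (x : Ed d) : ℂ := ∑ i, (x i : ℂ) * pd i f x

/-- Legendre operator L f = ∇·((1-|x|²)∇f). -/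
def legendreOp {d : ℕ} (f : Ed d → ℂ) (x : Ed d) : ℂ :=
  ∑ i, pd i (fun y => ((1 - ‖y‖ ^ 2 : ℝ) : ℂ) * pd i f y) x

/-- Prolate operator W f = L f - |x|² f. -/
def prolateOp {d : ℕ} (f : Ed d → ℂ) (x : Ed d) : ℂ :=
  legendreOp f x - ((‖x‖ ^ 2 : ℝ) : ℂ) * f x

/-- Partial derivative ∂ᵢ of a real-valued function. -/
def pdR {d : ℕ} (i : Fin d) (f : Ed d → ℝ) (x : Ed d) : ℝ :=
  fderiv ℝ f x (EuclideanSpace.single i 1)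

/-- Legendre operator on real functions. -/
def legendreR {d : ℕ} (f : Ed d → ℝ) (x : Ed d) : ℝ :=
  ∑ i, pdR i (fun y => (1 - ‖y‖ ^ 2) * pdR i f y) x

/-- The smooth cutoff `x ↦ S (N (1 - ‖x‖²) - 1)`, with `S = Real.smoothTransition`; it vanishes
for `1 - ‖x‖² ≤ 1 / N` and equals one for `1 - ‖x‖² ≥ 2 / N`. -/
def ballCutoff {d : ℕ} (N : ℝ) (x : Ed d) : ℝ :=
  Real.smoothTransition (N * (1 - ‖x‖ ^ 2) - 1)

/-- The region of the unit ball where `ballCutoff N` may differ from one. -/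
def cutoffLayer (d : ℕ) (N : ℝ) : Set (Ed d) :=
  {x ∈ Metric.ball (0 : Ed d) 1 | N * (1 - ‖x‖ ^ 2) ≤ 2}

lemma contDiff_ballCutoff {d : ℕ} (N : ℝ) : ContDiff ℝ (⊤ : ℕ∞) (ballCutoff (d := d) N) := by
  unfold ballCutoff
  exact Real.smoothTransition.contDiff.comp
    ((contDiff_const.mul (contDiff_const.sub (contDiff_norm_sq ℝ))).sub contDiff_const)

lemma tsupport_ballCutoff_mul_subset {d : ℕ} {N : ℝ} (hN : 0 < N) (u : Ed d → ℝ) :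
    tsupport (fun x => ballCutoff N x * u x) ⊆ Metric.ball (0 : Ed d) 1 := by
  have h_closed : IsClosed {x : Ed d | 1 ≤ N * (1 - ‖x‖ ^ 2)} :=
    isClosed_le continuous_const (by fun_prop)
  refine (closure_minimal ?_ h_closed).trans ?_
  · intro x hx
    by_contra h
    refine hx ?_
    have h' : N * (1 - ‖x‖ ^ 2) - 1 ≤ 0 := by
      simp only [Set.mem_ofPred_eq, not_le] at h; linarith
    simp [ballCutoff, Real.smoothTransition.zero_of_nonpos h']
  · intro x hx
    simp only [Set.mem_ofPred_eq] at hx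
    rw [mem_ball_zero_iff]
    by_contra! h
    have : 0 ≤ N * (‖x‖ ^ 2 - 1) := mul_nonneg hN.le (by nlinarith)
    linarith

lemma pdR_ballCutoff {d : ℕ} (N : ℝ) (i : Fin d) (x : Ed d) :
    pdR i (ballCutoff N) x =
      deriv Real.smoothTransition (N * (1 - ‖x‖ ^ 2) - 1) * (N * (-(2 * x i))) := by
  have hS : HasDerivAt Real.smoothTransition
      (deriv Real.smoothTransition (N * (1 - ‖x‖ ^ 2) - 1)) (N * (1 - ‖x‖ ^ 2) - 1) :=
    ((Real.smoothTransition.contDiff (n := 1)).differentiable one_ne_zero _).hasDerivAt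
  have h_norm : HasFDerivAt (fun y : Ed d => ‖y‖ ^ 2) (2 • innerSL ℝ x) x :=
    (hasStrictFDerivAt_norm_sq x).hasFDerivAt
  have h := hS.comp_hasFDerivAt x (((h_norm.const_sub 1).const_mul N).sub_const 1)
  have h_fderiv := h.fderiv
  unfold pdR
  change fderiv ℝ (Real.smoothTransition ∘ fun y : Ed d => N * (1 - ‖y‖ ^ 2) - 1) x _ = _
  rw [h_fderiv]
  simp [EuclideanSpace.inner_single_right]

lemma deriv_smoothTransition_of_one_lt {t : ℝ} (ht : 1 < t) :
    deriv Real.smoothTransition t = 0 := by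
  have h : Real.smoothTransition =ᶠ[𝓝 t] fun _ => 1 := by
    filter_upwards [lt_mem_nhds ht] with y hy
    exact Real.smoothTransition.one_of_one_le hy.le
  rw [h.deriv_eq, deriv_const]

lemma measurableSet_cutoffLayer (d : ℕ) (N : ℝ) : MeasurableSet (cutoffLayer d N) :=
  measurableSet_ball.inter
    (isClosed_le (by fun_prop : Continuous fun x : Ed d => N * (1 - ‖x‖ ^ 2))
      continuous_const).measurableSet

lemma mul_volume_cutoffLayer_le (d : ℕ) {N : ℝ} (hN : 2 < N) :
    N * volume.real (cutoffLayer d N) ≤ 2 * d * volume.real (Metric.ball (0 : Ed d) 1) := by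
  have hN0 : 0 < N := by linarith
  set r : ℝ := 1 - 2 / N with hr
  have h_div : 2 / N < 1 := by rw [div_lt_one hN0]; exact hN
  have h_div_pos : 0 < 2 / N := by positivity
  have h_sub : cutoffLayer d N ⊆ Metric.ball (0 : Ed d) 1 \ Metric.ball 0 r := by
    rintro x ⟨hx, hxN⟩
    refine ⟨hx, ?_⟩
    rw [mem_ball_zero_iff] at hx
    rw [mem_ball_zero_iff, not_lt]
    have h1 : 1 - ‖x‖ ^ 2 ≤ 2 / N := by rw [le_div_iff₀ hN0]; linarith
    nlinarith [norm_nonneg x]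
  have h_vol : volume.real (Metric.ball (0 : Ed d) r) =
      r ^ d * volume.real (Metric.ball (0 : Ed d) 1) := by
    rw [Measure.real, Measure.addHaar_ball_of_pos _ _ (by linarith : 0 < r), ENNReal.toReal_mul,
      ENNReal.toReal_ofReal (pow_nonneg (by linarith) _), finrank_euclideanSpace_fin]
    rfl
  have h_le : volume.real (cutoffLayer d N) ≤
      volume.real (Metric.ball (0 : Ed d) 1) - volume.real (Metric.ball (0 : Ed d) r) := by
    rw [← measureReal_sdiff (Metric.ball_subset_ball (by linarith)) measurableSet_ball
      (measure_ball_lt_top.ne)]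
    exact measureReal_mono h_sub
      ((measure_mono Set.sdiff_subset).trans_lt measure_ball_lt_top).ne
  have h_bern : 1 + (d : ℝ) * (-(2 / N)) ≤ r ^ d := by
    have := one_add_mul_le_pow (a := -(2 / N)) (by linarith) d
    rwa [← sub_eq_add_neg 1 (2 / N)] at this
  have hB : 0 ≤ volume.real (Metric.ball (0 : Ed d) 1) := measureReal_nonneg
  calc N * volume.real (cutoffLayer d N)
      ≤ N * ((d * (2 / N)) * volume.real (Metric.ball (0 : Ed d) 1)) := by
        rw [h_vol] at h_le
        gcongr
        nlinarith
    _ = 2 * d * volume.real (Metric.ball (0 : Ed d) 1) := by field_simp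

/-- A nonnegative function on the unit ball bounded by `a` plus `b` on the cutoff layer has
integral bounded accordingly. -/
lemma setIntegral_ball_le_of_le_indicator {d : ℕ} {N a b : ℝ} {f : Ed d → ℝ}
    (hf : ∀ x ∈ Metric.ball (0 : Ed d) 1, 0 ≤ f x)
    (hfg : ∀ x ∈ Metric.ball (0 : Ed d) 1, f x ≤ a + (cutoffLayer d N).indicator (fun _ => b) x) :
    ∫ x in Metric.ball (0 : Ed d) 1, f x ≤
      a * volume.real (Metric.ball (0 : Ed d) 1) + b * volume.real (cutoffLayer d N) := by
  have h_ae : ∀ᵐ x ∂(volume.restrict (Metric.ball (0 : Ed d) 1)), x ∈ Metric.ball (0 : Ed d) 1 :=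
    ae_restrict_mem measurableSet_ball
  have h_fin : IsFiniteMeasure (volume.restrict (Metric.ball (0 : Ed d) 1)) :=
    ⟨by simpa using measure_ball_lt_top⟩
  have h_ind : Integrable ((cutoffLayer d N).indicator fun _ => b)
      (volume.restrict (Metric.ball (0 : Ed d) 1)) :=
    (integrable_const b).indicator (measurableSet_cutoffLayer d N)
  calc ∫ x in Metric.ball (0 : Ed d) 1, f x
      ≤ ∫ x in Metric.ball (0 : Ed d) 1, (a + (cutoffLayer d N).indicator (fun _ => b) x) :=
        integral_mono_of_nonneg (h_ae.mono hf) ((integrable_const a).add h_ind) (h_ae.mono hfg)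
    _ = _ := by
        have h_inter : Metric.ball (0 : Ed d) 1 ∩ cutoffLayer d N = cutoffLayer d N :=
          Set.inter_eq_right.2 fun x hx => hx.1
        rw [integral_add (integrable_const a) h_ind, setIntegral_const,
          setIntegral_indicator (measurableSet_cutoffLayer d N), h_inter, setIntegral_const,
          smul_eq_mul, smul_eq_mul, mul_comm a, mul_comm b]

lemma exists_bound_pdR_ballCutoff (d : ℕ) : ∃ K : ℝ, ∀ (N : ℝ), 2 < N →
    ∀ x ∈ Metric.ball (0 : Ed d) 1, ∀ i, (1 - ‖x‖ ^ 2) * pdR i (ballCutoff N) x ^ 2 ≤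
      (cutoffLayer d N).indicator (fun _ => K * N) x := by
  obtain ⟨K, hK⟩ := (isCompact_Icc (a := (-1 : ℝ)) (b := 1)).exists_bound_of_continuousOn
    ((Real.smoothTransition.contDiff (n := 1)).continuous_deriv le_rfl).continuousOn
  refine ⟨8 * K ^ 2, fun N hN x hx i => ?_⟩
  have hxn : ‖x‖ < 1 := mem_ball_zero_iff.1 hx
  have hs : 0 < 1 - ‖x‖ ^ 2 := by nlinarith [norm_nonneg x]
  have hNs : 0 < N * (1 - ‖x‖ ^ 2) := mul_pos (by linarith) hs
  by_cases hL : x ∈ cutoffLayer d N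
  · rw [Set.indicator_of_mem hL, pdR_ballCutoff]
    have hb := hK (N * (1 - ‖x‖ ^ 2) - 1) ⟨by linarith, by linarith [hL.2]⟩
    set D := deriv Real.smoothTransition (N * (1 - ‖x‖ ^ 2) - 1)
    have hD : D ^ 2 ≤ K ^ 2 := sq_le_sq' (abs_le.1 hb).1 (abs_le.1 hb).2
    have hxi : (x i) ^ 2 ≤ 1 := by
      have h1 : |x i| ≤ ‖x‖ := PiLp.norm_apply_le x i
      rw [sq_le_one_iff_abs_le_one]; linarith
    calc (1 - ‖x‖ ^ 2) * (D * (N * (-(2 * x i)))) ^ 2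
        = 4 * N * (N * (1 - ‖x‖ ^ 2)) * (D ^ 2 * (x i) ^ 2) := by ring
      _ ≤ 4 * N * 2 * (K ^ 2 * 1) := by
          have := hL.2
          gcongr
      _ = 8 * K ^ 2 * N := by ring
  · have h2 : 2 < N * (1 - ‖x‖ ^ 2) := by
      by_contra! h
      exact hL ⟨hx, h⟩
    rw [Set.indicator_of_notMem hL, pdR_ballCutoff, deriv_smoothTransition_of_one_lt (by linarith)]
    simp

lemma pdR_mul {d : ℕ} {f g : Ed d → ℝ} (i : Fin d) {x : Ed d} (hf : DifferentiableAt ℝ f x)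
    (hg : DifferentiableAt ℝ g x) :
    pdR i (fun y => f y * g y) x = f x * pdR i g x + g x * pdR i f x := by
  simp [pdR, fderiv_fun_mul hf hg]

lemma exists_bound_ball {d : ℕ} {u : Ed d → ℝ} (hu : ContDiff ℝ (⊤ : ℕ∞) u) :
    ∃ M : ℝ, ∀ x ∈ Metric.ball (0 : Ed d) 1, u x ^ 2 ≤ M ∧ ∀ i, pdR i u x ^ 2 ≤ M := by
  obtain ⟨M, hM⟩ := (isCompact_closedBall (0 : Ed d) 1).exists_bound_of_continuousOn
    hu.continuous.continuousOn
  obtain ⟨M', hM'⟩ := (isCompact_closedBall (0 : Ed d) 1).exists_bound_of_continuousOn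
    (hu.continuous_fderiv (by simp)).continuousOn
  refine ⟨M ^ 2 + M' ^ 2, fun x hx => ⟨?_, fun i => ?_⟩⟩
  · have h := hM x (Metric.ball_subset_closedBall hx)
    have := sq_le_sq' (abs_le.1 h).1 (abs_le.1 h).2
    nlinarith [sq_nonneg M']
  · have h : |pdR i u x| ≤ M' := by
      refine ((fderiv ℝ u x).le_opNorm _).trans ?_
      simpa using hM' x (Metric.ball_subset_closedBall hx)
    have := sq_le_sq' (abs_le.1 h).1 (abs_le.1 h).2
    nlinarith [sq_nonneg M]

/-- Form core approximation: every smooth function on the closed unit ball is an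
L²(B)-limit of test functions in C₀^∞(B) with bounded Legendre quadratic forms. -/
theorem form_core_approximation (d : ℕ) (u : Ed d → ℝ) (hu : ContDiff ℝ (⊤ : ℕ∞) u) :
    ∃ useq : ℕ → Ed d → ℝ,
      (∀ n, ContDiff ℝ (⊤ : ℕ∞) (useq n) ∧ HasCompactSupport (useq n) ∧
        tsupport (useq n) ⊆ Metric.ball (0 : Ed d) 1) ∧
      Tendsto (fun n => ∫ x in Metric.ball (0 : Ed d) 1, (useq n x - u x) ^ 2)
        atTop (nhds 0) ∧
      ∃ C : ℝ, ∀ n, ∫ x in Metric.ball (0 : Ed d) 1,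
          (1 - ‖x‖ ^ 2) * ∑ i, pdR i (useq n) x ^ 2 ≤ C := by
  obtain ⟨M, hM⟩ := exists_bound_ball hu
  obtain ⟨K, hK⟩ := exists_bound_pdR_ballCutoff d
  have hM0 : 0 ≤ M := (sq_nonneg _).trans (hM 0 (by simp)).1
  have hN : ∀ n : ℕ, (2 : ℝ) < n + 3 := fun n => by linarith [n.cast_nonneg (α := ℝ)]
  set V := volume.real (Metric.ball (0 : Ed d) 1)
  have h_sq : ∀ (N : ℝ) (x : Ed d), ballCutoff N x ^ 2 ≤ 1 := fun N x =>
    pow_le_one₀ (Real.smoothTransition.nonneg _) (Real.smoothTransition.le_one _)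
  refine ⟨fun n x => ballCutoff (n + 3) x * u x, fun n => ?_, ?_,
    d * (2 * M) * V + 2 * d * M * |K| * (2 * d * V), fun n => ?_⟩
  · have h_sub := tsupport_ballCutoff_mul_subset (by linarith [hN n] : (0 : ℝ) < n + 3) u
    exact ⟨(contDiff_ballCutoff _).mul hu, (isCompact_closedBall (0 : Ed d) 1).of_isClosed_subset
      (isClosed_tsupport _) (h_sub.trans Metric.ball_subset_closedBall), h_sub⟩
  · have h_lim : Tendsto (fun n : ℕ => M * (2 * d * V / ((n : ℝ) + 3))) atTop (𝓝 0) := by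
      rw [← mul_zero M]
      exact (tendsto_const_nhds.div_atTop
        (tendsto_atTop_add_const_right _ _ tendsto_natCast_atTop_atTop)).const_mul M
    refine squeeze_zero (fun n => integral_nonneg fun x => sq_nonneg _) (fun n => ?_) h_lim
    refine (setIntegral_ball_le_of_le_indicator (N := n + 3) (a := 0) (b := M)
      (fun x _ => sq_nonneg _) fun x hx => ?_).trans ?_
    · by_cases hL : x ∈ cutoffLayer d (n + 3)
      · rw [Set.indicator_of_mem hL, zero_add]
        have h0 : 0 ≤ ballCutoff (n + 3) x := Real.smoothTransition.nonneg _
        have h1 : ballCutoff (n + 3) x ≤ 1 := Real.smoothTransition.le_one _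
        calc (ballCutoff (n + 3) x * u x - u x) ^ 2
            = (1 - ballCutoff (n + 3) x) ^ 2 * u x ^ 2 := by ring
          _ ≤ 1 * M := by
              gcongr
              · exact pow_le_one₀ (by linarith) (by linarith)
              · exact (hM x hx).1
          _ = M := one_mul M
      · have h2 : 2 < ((n : ℝ) + 3) * (1 - ‖x‖ ^ 2) := by
          by_contra! h
          exact hL ⟨hx, h⟩
        have h1 : ballCutoff (n + 3) x = 1 :=
          Real.smoothTransition.one_of_one_le (by linarith)
        simp [Set.indicator_of_notMem hL, h1]
    · rw [zero_mul, zero_add]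
      gcongr
      rw [le_div_iff₀ (by linarith [hN n]), mul_comm]
      exact mul_volume_cutoffLayer_le d (hN n)
  · have h_nonneg : ∀ x ∈ Metric.ball (0 : Ed d) 1, 0 ≤ 1 - ‖x‖ ^ 2 := fun x hx => by
      have := mem_ball_zero_iff.1 hx
      nlinarith [norm_nonneg x]
    refine (setIntegral_ball_le_of_le_indicator (N := n + 3) (a := d * (2 * M))
      (b := 2 * d * M * |K| * (n + 3))
      (fun x hx => mul_nonneg (h_nonneg x hx) (Finset.sum_nonneg fun i _ => sq_nonneg _))
      fun x hx => ?_).trans ?_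
    · have h_term : ∀ i, (1 - ‖x‖ ^ 2) * pdR i (fun y => ballCutoff (n + 3) y * u y) x ^ 2 ≤
          2 * M + (cutoffLayer d (n + 3)).indicator (fun _ => 2 * M * |K| * (n + 3)) x := by
        intro i
        rw [pdR_mul i ((contDiff_ballCutoff _).differentiable (by simp) x)
          (hu.differentiable (by simp) x)]
        set c := ballCutoff ((n : ℝ) + 3) x
        set p := pdR i u x
        set q := pdR i (ballCutoff ((n : ℝ) + 3)) x
        have hs0 := h_nonneg x hx
        have hs1 : 1 - ‖x‖ ^ 2 ≤ 1 := by linarith [sq_nonneg ‖x‖]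
        have hq : (1 - ‖x‖ ^ 2) * q ^ 2 ≤
            (cutoffLayer d (n + 3)).indicator (fun _ => |K| * ((n : ℝ) + 3)) x :=
          (hK _ (hN n) x hx i).trans
            (Set.indicator_le_indicator
              (mul_le_mul_of_nonneg_right (le_abs_self K) (by linarith [hN n])))
        have h_ind : (cutoffLayer d (n + 3)).indicator (fun _ => 2 * M * |K| * ((n : ℝ) + 3)) x =
            2 * (M * (cutoffLayer d (n + 3)).indicator (fun _ => |K| * ((n : ℝ) + 3)) x) := by
          by_cases hL : x ∈ cutoffLayer d (n + 3)
          · simp only [Set.indicator_of_mem hL]; ring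
          · simp only [Set.indicator_of_notMem hL]; ring
        calc (1 - ‖x‖ ^ 2) * (c * p + u x * q) ^ 2
            ≤ (1 - ‖x‖ ^ 2) * (2 * ((c * p) ^ 2 + (u x * q) ^ 2)) := by
              gcongr
              exact add_sq_le
          _ = 2 * ((1 - ‖x‖ ^ 2) * (c ^ 2 * p ^ 2)) +
              2 * (u x ^ 2 * ((1 - ‖x‖ ^ 2) * q ^ 2)) := by ring
          _ ≤ 2 * (1 * (1 * M)) + 2 * (M *
              (cutoffLayer d (n + 3)).indicator (fun _ => |K| * ((n : ℝ) + 3)) x) := by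
              gcongr
              · exact h_sq _ x
              · exact (hM x hx).2 i
              · exact (hM x hx).1
          _ = _ := by rw [h_ind]; ring
      rw [Finset.mul_sum]
      refine (Finset.sum_le_sum fun i _ => h_term i).trans_eq ?_
      rw [Finset.sum_const, Finset.card_univ, Fintype.card_fin, nsmul_eq_mul]
      by_cases hL : x ∈ cutoffLayer d (n + 3)
      · simp only [Set.indicator_of_mem hL]; ring
      · simp only [Set.indicator_of_notMem hL]; ring
    · rw [mul_assoc _ ((n : ℝ) + 3)]
      exact add_le_add_right (mul_le_mul_of_nonneg_left (mul_volume_cutoffLayer_le d (hN n))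
        (by positivity)) _
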